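/- Let α ≥ 1 and let ρ be a 2π-periodic function in the Gevrey class G_α, i.e. there exist η > 0 and M with sup_x |ρ^{(s)}(x)| ≤ M (s!)^α / η^s for all s ≥ 1. Then there is a constant Const (depending on M, η, α) such that the Fourier projection of ρ satisfies the fractional-exponential accuracy bound |S_N ρ(x) - ρ(x)| ≤ Const · N · e^{-α(ηN)^{1/α}} for all x and all N ≥ 1. -/

import Mathlib

open MeasureTheory Real

noncomputable section

/-- Dirichlet kernel of degree `p`: `D_p(x) = (1/2π) ∑_{|k| ≤ p} e^{ikx}`. -/
def dirichletKer (p : ℕ) (x : ℝ) : ℝ :=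
  (1 / (2 * π)) * ∑ k ∈ Finset.Icc (-(p : ℤ)) (p : ℤ), Real.cos (k * x)

/-- Fourier coefficient `f̂_k` of a 2π-periodic function. -/
def fourierCoefOn (f : ℝ → ℂ) (k : ℤ) : ℂ :=
  (1 / (2 * π)) * ∫ y in (-π)..π, f y * Complex.exp (-(Complex.I * k * y))

/-- `N`-th Fourier partial sum `S_N f`. -/
def SN (N : ℕ) (f : ℝ → ℂ) (x : ℝ) : ℂ :=
  ∑ k ∈ Finset.Icc (-(N : ℤ)) (N : ℤ), fourierCoefOn f k * Complex.exp (Complex.I * k * x)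

/-- The two-parameter spectral mollifier `ψ_{p,θ}(x) = (1/θ) ρ(x/θ) D_p(x/θ)`. -/
def specMollifier (ρ : ℝ → ℝ) (p : ℕ) (θ : ℝ) (x : ℝ) : ℝ :=
  (1 / θ) * ρ (x / θ) * dirichletKer p (x / θ)

/-- `‖g‖_{C^s}`: the sup norm of the `s`-th derivative of `g`. -/
def CsNorm (s : ℕ) (g : ℝ → ℝ) : ℝ := ⨆ x : ℝ, |iteratedDeriv s g x|

/-!
Since `f^{(s)}` has Fourier coefficients `(ik)^s f̂_k`, Cauchy–Schwarz on the tail `|k| > N`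
together with Bessel's inequality for `f^{(s)}` gives `|S_N f - f| ≤ √(2N) ‖f^{(s)}‖_∞ / N^s`,
which is better by a factor `√N` than the bound `Const · N · ‖f^{(s)}‖_∞ / N^s`. That factor pays
for the Stirling loss: for `t = (ηN)^{1/α}` and `s = ⌈t⌉`, one has `s! / t^s ≲ √t e^{-t}`, whose
`α`-th power is `(s!)^α / (ηN)^s ≲ √(ηN) e^{-α(ηN)^{1/α}}`.
-/

section FourierCoefficients

lemma fourier_coe_eq_exp {T : ℝ} (hT : T = 2 * π) (k : ℤ) (x : ℝ) :
    fourier k (x : AddCircle T) = Complex.exp (Complex.I * k * x) := by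
  have hπ : (π : ℂ) ≠ 0 := by exact_mod_cast pi_ne_zero
  rw [fourier_coe_apply, hT]
  push_cast
  congr 1
  field_simp

lemma fourierCoefOn_eq_fourierCoeffOn (f : ℝ → ℂ) (k : ℤ) :
    fourierCoefOn f k = fourierCoeffOn (neg_lt_self pi_pos) f k := by
  have hlength : π - -π = 2 * π := by ring
  simp only [fourierCoeffOn_eq_integral, fourier_coe_eq_exp hlength, smul_eq_mul, hlength,
    fourierCoefOn, Complex.real_smul]
  push_cast
  simp only [mul_neg, neg_mul, mul_comm (f _)]

lemma hasSum_sq_norm_fourierCoefOn {f : ℝ → ℂ}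
    (hf : MemLp f 2 (volume.restrict (Set.Ioc (-π) π))) :
    HasSum (fun k => ‖fourierCoefOn f k‖ ^ 2) ((2 * π)⁻¹ * ∫ x in (-π)..π, ‖f x‖ ^ 2) := by
  simpa only [fourierCoefOn_eq_fourierCoeffOn, smul_eq_mul, sub_neg_eq_add, two_mul] using
    hasSum_sq_fourierCoeffOn (neg_lt_self pi_pos) hf

lemma sum_sq_norm_fourierCoefOn_le {f : ℝ → ℂ} {B : ℝ}
    (hf : AEStronglyMeasurable f (volume.restrict (Set.Ioc (-π) π)))
    (hB : ∀ x ∈ Set.Ioc (-π) π, ‖f x‖ ≤ B) (F : Finset ℤ) :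
    ∑ k ∈ F, ‖fourierCoefOn f k‖ ^ 2 ≤ B ^ 2 := by
  have hL2 : MemLp f 2 (volume.restrict (Set.Ioc (-π) π)) :=
    MemLp.of_bound hf B (ae_restrict_of_forall_mem measurableSet_Ioc hB)
  have hint : ∫ x in (-π)..π, ‖f x‖ ^ 2 ≤ B ^ 2 * (2 * π) := by
    refine (le_norm_self _).trans ?_
    have h := intervalIntegral.norm_integral_le_of_norm_le_const (a := -π) (b := π)
      (f := fun x => ‖f x‖ ^ 2) (C := B ^ 2) fun x hx => by
        rw [Set.uIoc_of_le (neg_le_self pi_pos.le)] at hx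
        rw [norm_pow, norm_norm]
        gcongr
        exact hB x hx
    rwa [sub_neg_eq_add, ← two_mul, abs_of_pos two_pi_pos] at h
  calc ∑ k ∈ F, ‖fourierCoefOn f k‖ ^ 2
      ≤ (2 * π)⁻¹ * ∫ x in (-π)..π, ‖f x‖ ^ 2 :=
        sum_le_hasSum F (fun _ _ => by positivity) (hasSum_sq_norm_fourierCoefOn hL2)
    _ ≤ B ^ 2 := by rwa [inv_mul_le_iff₀ two_pi_pos, mul_comm]

lemma fourierCoefOn_of_hasDerivAt {f f' : ℝ → ℂ}
    (hf : ∀ x ∈ Set.uIcc (-π) π, HasDerivAt f (f' x) x)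
    (hf' : IntervalIntegrable f' volume (-π) π) (hends : f (-π) = f π) (k : ℤ) :
    fourierCoefOn f' k = Complex.I * k * fourierCoefOn f k := by
  rcases eq_or_ne k 0 with rfl | hk
  · simp [fourierCoefOn, intervalIntegral.integral_eq_sub_of_hasDerivAt hf hf', hends]
  · have hπ : (π : ℂ) ≠ 0 := by exact_mod_cast pi_ne_zero
    have hk' : (k : ℂ) ≠ 0 := by exact_mod_cast hk
    rw [fourierCoefOn_eq_fourierCoeffOn, fourierCoefOn_eq_fourierCoeffOn,
      fourierCoeffOn_of_hasDerivAt (neg_lt_self pi_pos) hk hf hf', hends]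
    push_cast
    field_simp
    ring

lemma periodic_iteratedDeriv {𝕜 E : Type*} [NontriviallyNormedField 𝕜] [NormedAddCommGroup E]
    [NormedSpace 𝕜 E] {f : 𝕜 → E} {c : 𝕜} (hf : Function.Periodic f c) (s : ℕ) :
    Function.Periodic (iteratedDeriv s f) c := fun x => by
  have h := congrFun (iteratedDeriv_comp_add_const s f c) x
  rw [← h, hf.funext]

lemma fourierCoefOn_iteratedDeriv {f : ℝ → ℂ} (hper : Function.Periodic f (2 * π)) {s : ℕ}
    (hf : ContDiff ℝ s f) (k : ℤ) :
    fourierCoefOn (iteratedDeriv s f) k = (Complex.I * k) ^ s * fourierCoefOn f k := by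
  induction s with
  | zero => simp
  | succ s ih =>
    have hderiv : ∀ x, HasDerivAt (iteratedDeriv s f) (iteratedDeriv (s + 1) f x) x := fun x => by
      rw [iteratedDeriv_succ]
      exact (hf.differentiable_iteratedDeriv s (by exact_mod_cast s.lt_succ_self) x).hasDerivAt
    have hends : iteratedDeriv s f (-π) = iteratedDeriv s f π := by
      rw [← periodic_iteratedDeriv hper s (-π)]
      ring_nf
    rw [fourierCoefOn_of_hasDerivAt (fun x _ => hderiv x)
      ((hf.continuous_iteratedDeriv _ le_rfl).intervalIntegrable _ _) hends,
      ih (hf.of_le (by exact_mod_cast s.le_succ)), pow_succ']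
    ring

lemma norm_fourierCoefOn_eq {f : ℝ → ℂ} (hper : Function.Periodic f (2 * π)) {s : ℕ}
    (hf : ContDiff ℝ s f) {k : ℤ} (hk : k ≠ 0) :
    ‖fourierCoefOn f k‖ = (|(k : ℝ)| ^ s)⁻¹ * ‖fourierCoefOn (iteratedDeriv s f) k‖ := by
  have hk' : |(k : ℝ)| ≠ 0 := by simpa using hk
  rw [fourierCoefOn_iteratedDeriv hper hf, norm_mul, norm_pow, norm_mul, Complex.norm_I, one_mul,
    Complex.norm_intCast, inv_mul_cancel_left₀ (pow_ne_zero s hk')]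

end FourierCoefficients

section Convergence

lemma summable_fourierCoefOn {f : ℝ → ℂ} (hper : Function.Periodic f (2 * π))
    (hf : ContDiff ℝ 1 f) : Summable (fourierCoefOn f) := by
  have hf' : Continuous (iteratedDeriv 1 f) := hf.continuous_iteratedDeriv 1 le_rfl
  have hL2 : MemLp (iteratedDeriv 1 f) 2 (volume.restrict (Set.Ioc (-π) π)) :=
    (memLp_two_iff_integrable_sq_norm hf'.aestronglyMeasurable).2
      (hf'.norm.pow 2).integrableOn_Ioc
  refine Summable.of_norm_bounded_eventually
    ((summable_one_div_int_pow.mpr one_lt_two).add (hasSum_sq_norm_fourierCoefOn hL2).summable) ?_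
  filter_upwards [(Set.finite_singleton (0 : ℤ)).compl_mem_cofinite] with k hk
  rw [norm_fourierCoefOn_eq (s := 1) hper (by exact_mod_cast hf) hk, pow_one, ← sq_abs (k : ℝ),
    one_div, ← inv_pow]
  nlinarith [two_mul_le_add_sq |(k : ℝ)|⁻¹ ‖fourierCoefOn (iteratedDeriv 1 f) k‖,
    sq_nonneg |(k : ℝ)|⁻¹, sq_nonneg ‖fourierCoefOn (iteratedDeriv 1 f) k‖]

lemma liftIoc_eq_lift {E : Type*} {f : ℝ → E} {T : ℝ} [Fact (0 < T)]
    (hf : Function.Periodic f T) (a : ℝ) : AddCircle.liftIoc T a f = hf.lift :=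
  funext fun _ => congrArg hf.lift AddCircle.coe_equivIoc

lemma hasSum_fourierCoefOn {f : ℝ → ℂ} (hper : Function.Periodic f (2 * π))
    (hf : Continuous f) (hsum : Summable (fourierCoefOn f)) (x : ℝ) :
    HasSum (fun k : ℤ => fourierCoefOn f k * Complex.exp (Complex.I * k * x)) (f x) := by
  have hlength : π - -π = 2 * π := by ring
  have : Fact (0 < π - -π) := ⟨hlength ▸ two_pi_pos⟩
  have hper' : Function.Periodic f (π - -π) := hlength ▸ hper
  let F : C(AddCircle (π - -π), ℂ) := ⟨hper'.lift, hf.quotient_lift _⟩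
  have hcoef : fourierCoeff F = fourierCoefOn f := funext fun k => by
    rw [fourierCoefOn_eq_fourierCoeffOn, fourierCoeffOn, liftIoc_eq_lift hper']
    rfl
  have hF := has_pointwise_sum_fourier_series_of_summable (hcoef ▸ hsum) (x : AddCircle (π - -π))
  simp only [hcoef, fourier_coe_eq_exp hlength, smul_eq_mul] at hF
  exact hF

end Convergence

section SpectralEstimate

lemma sum_sdiff_Icc_inv_sq_le {N K : ℕ} (hN : N ≠ 0) (hK : N ≤ K) :
    ∑ k ∈ Finset.Icc (-(K : ℤ)) K \ Finset.Icc (-(N : ℤ)) N, ((k : ℝ) ^ 2)⁻¹ ≤ 2 / N := by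
  have heven : Function.Even fun k : ℤ => ((k : ℝ) ^ 2)⁻¹ := fun k => by simp
  rw [Finset.sum_sdiff_eq_sub (Finset.Icc_subset_Icc (by omega) (by omega)),
    Finset.sum_Icc_of_even_eq_range heven, Finset.sum_Icc_of_even_eq_range heven]
  have htail : ∑ k ∈ Finset.range (K + 1), ((k : ℝ) ^ 2)⁻¹
      - ∑ k ∈ Finset.range (N + 1), ((k : ℝ) ^ 2)⁻¹ ≤ (N : ℝ)⁻¹ - (K : ℝ)⁻¹ := by
    rw [← Finset.sum_Ico_eq_sub _ (by omega : N + 1 ≤ K + 1), Finset.Ico_add_one_add_one_eq_Ioc]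
    exact sum_Ioc_inv_sq_le_sub hN hK
  have hK_nonneg : (0 : ℝ) ≤ (K : ℝ)⁻¹ := by positivity
  simp only [nsmul_eq_mul, Nat.cast_ofNat, Int.cast_natCast, div_eq_mul_inv]
  linarith

lemma natCast_lt_abs_of_mem_sdiff_Icc {N : ℕ} {s : Finset ℤ} {k : ℤ}
    (hk : k ∈ s \ Finset.Icc (-(N : ℤ)) N) : (N : ℝ) < |(k : ℝ)| := by
  rw [Finset.mem_sdiff, Finset.mem_Icc, ← abs_le, not_le] at hk
  exact_mod_cast hk.2

lemma sum_sdiff_Icc_inv_pow_sq_le {N K s : ℕ} (hN : N ≠ 0) (hK : N ≤ K) (hs : s ≠ 0) :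
    ∑ k ∈ Finset.Icc (-(K : ℤ)) K \ Finset.Icc (-(N : ℤ)) N, ((|(k : ℝ)| ^ s)⁻¹) ^ 2
      ≤ 2 * N / (N ^ s) ^ 2 := by
  obtain ⟨r, rfl⟩ := Nat.exists_eq_succ_of_ne_zero hs
  calc ∑ k ∈ Finset.Icc (-(K : ℤ)) K \ Finset.Icc (-(N : ℤ)) N, ((|(k : ℝ)| ^ (r + 1))⁻¹) ^ 2
      ≤ ∑ k ∈ Finset.Icc (-(K : ℤ)) K \ Finset.Icc (-(N : ℤ)) N,
          ((N : ℝ) ^ r)⁻¹ ^ 2 * ((k : ℝ) ^ 2)⁻¹ := by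
        refine Finset.sum_le_sum fun k hk => ?_
        have hNk := natCast_lt_abs_of_mem_sdiff_Icc hk
        rw [pow_succ |(k : ℝ)| r, mul_inv, mul_pow, inv_pow |(k : ℝ)|, sq_abs]
        gcongr
    _ ≤ ((N : ℝ) ^ r)⁻¹ ^ 2 * (2 / N) := by
        rw [← Finset.mul_sum]
        gcongr
        exact sum_sdiff_Icc_inv_sq_le hN hK
    _ = 2 * N / (N ^ (r + 1)) ^ 2 := by
        field_simp
        ring

lemma sum_sdiff_Icc_norm_fourierCoefOn_le {f : ℝ → ℂ} (hper : Function.Periodic f (2 * π))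
    {s : ℕ} (hs : s ≠ 0) (hf : ContDiff ℝ s f) {B : ℝ} (hB : ∀ x, ‖iteratedDeriv s f x‖ ≤ B)
    {N K : ℕ} (hN : N ≠ 0) (hK : N ≤ K) :
    ∑ k ∈ Finset.Icc (-(K : ℤ)) K \ Finset.Icc (-(N : ℤ)) N, ‖fourierCoefOn f k‖
      ≤ √(2 * N) * B / N ^ s := by
  set F := Finset.Icc (-(K : ℤ)) K \ Finset.Icc (-(N : ℤ)) N
  have hB_nonneg : 0 ≤ B := (norm_nonneg _).trans (hB 0)
  have hbessel : ∑ k ∈ F, ‖fourierCoefOn (iteratedDeriv s f) k‖ ^ 2 ≤ B ^ 2 :=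
    sum_sq_norm_fourierCoefOn_le
      (hf.continuous_iteratedDeriv s le_rfl).aestronglyMeasurable (fun x _ => hB x) F
  calc ∑ k ∈ F, ‖fourierCoefOn f k‖
      = ∑ k ∈ F, (|(k : ℝ)| ^ s)⁻¹ * ‖fourierCoefOn (iteratedDeriv s f) k‖ := by
        refine Finset.sum_congr rfl fun k hk => norm_fourierCoefOn_eq hper hf ?_
        rintro rfl
        simp [F] at hk
    _ ≤ √(∑ k ∈ F, ((|(k : ℝ)| ^ s)⁻¹) ^ 2)
          * √(∑ k ∈ F, ‖fourierCoefOn (iteratedDeriv s f) k‖ ^ 2) :=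
        Real.sum_mul_le_sqrt_mul_sqrt _ _ _
    _ ≤ √(2 * N / (N ^ s) ^ 2) * √(B ^ 2) := by
        gcongr
        exact sum_sdiff_Icc_inv_pow_sq_le hN hK hs
    _ = √(2 * N) * B / N ^ s := by
        rw [sqrt_div (by positivity), sqrt_sq (by positivity), sqrt_sq hB_nonneg]
        ring

theorem norm_SN_sub_le {f : ℝ → ℂ} (hper : Function.Periodic f (2 * π)) {s : ℕ} (hs : s ≠ 0)
    (hf : ContDiff ℝ s f) {B : ℝ} (hB : ∀ x, ‖iteratedDeriv s f x‖ ≤ B) {N : ℕ} (hN : N ≠ 0)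
    (x : ℝ) : ‖SN N f x - f x‖ ≤ √(2 * N) * B / N ^ s := by
  have hsum : Summable (fourierCoefOn f) :=
    summable_fourierCoefOn hper (hf.of_le (by exact_mod_cast Nat.one_le_iff_ne_zero.mpr hs))
  have hlim : Filter.Tendsto (fun K : ℕ => SN K f x) Filter.atTop (nhds (f x)) :=
    (hasSum_fourierCoefOn hper hf.continuous hsum x).comp Finset.tendsto_Icc_neg
  rw [norm_sub_rev]
  refine le_of_tendsto (hlim.sub_const (SN N f x)).norm ?_
  filter_upwards [Filter.eventually_ge_atTop N] with K hK
  have hexp : ∀ k : ℤ, ‖Complex.exp (Complex.I * k * x)‖ = 1 := fun k => by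
    simp [Complex.norm_exp]
  calc ‖SN K f x - SN N f x‖
      = ‖∑ k ∈ Finset.Icc (-(K : ℤ)) K \ Finset.Icc (-(N : ℤ)) N,
          fourierCoefOn f k * Complex.exp (Complex.I * k * x)‖ := by
        rw [SN, SN, Finset.sum_sdiff_eq_sub (Finset.Icc_subset_Icc (by omega) (by omega))]
    _ ≤ ∑ k ∈ Finset.Icc (-(K : ℤ)) K \ Finset.Icc (-(N : ℤ)) N, ‖fourierCoefOn f k‖ := by
        refine (norm_sum_le _ _).trans_eq ?_
        simp only [norm_mul, hexp, mul_one]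
    _ ≤ √(2 * N) * B / N ^ s := sum_sdiff_Icc_norm_fourierCoefOn_le hper hs hf hB hN hK

end SpectralEstimate

section Optimization

lemma factorial_le_exp_one_mul_sqrt_mul_pow {n : ℕ} (hn : n ≠ 0) :
    (n.factorial : ℝ) ≤ exp 1 * √n * (n / exp 1) ^ n := by
  obtain ⟨m, rfl⟩ := Nat.exists_eq_succ_of_ne_zero hn
  have h : Stirling.stirlingSeq (m + 1) ≤ exp 1 / √2 := by
    simpa [Stirling.stirlingSeq_one] using Stirling.stirlingSeq'_antitone m.zero_le
  rw [Stirling.stirlingSeq, div_le_iff₀ (by positivity), sqrt_mul zero_le_two] at h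
  refine h.trans_eq ?_
  field_simp

lemma factorial_ceil_div_pow_le {t : ℝ} (ht : 0 < t) :
    (⌈t⌉₊.factorial : ℝ) / t ^ ⌈t⌉₊ ≤ exp (2 + 1 / t) * √(t + 1) * exp (-t) := by
  set s := ⌈t⌉₊
  have hs : s ≠ 0 := (Nat.ceil_pos.mpr ht).ne'
  have hts : t ≤ s := Nat.le_ceil t
  have hst : (s : ℝ) ≤ t + 1 := (Nat.ceil_lt_add_one ht.le).le
  have hratio : ((s : ℝ) / t) ^ s ≤ exp (1 + 1 / t) := calc
    ((s : ℝ) / t) ^ s ≤ exp (1 / t) ^ s := by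
        gcongr
        calc (s : ℝ) / t ≤ (t + 1) / t := by gcongr
          _ = 1 / t + 1 := by field_simp; ring
          _ ≤ exp (1 / t) := add_one_le_exp _
    _ = exp (s / t) := by rw [← exp_nat_mul, mul_one_div]
    _ ≤ exp ((t + 1) / t) := by gcongr
    _ = exp (1 + 1 / t) := by rw [add_div, div_self ht.ne']
  calc (s.factorial : ℝ) / t ^ s ≤ exp 1 * √s * (s / exp 1) ^ s / t ^ s := by
        gcongr
        exact factorial_le_exp_one_mul_sqrt_mul_pow hs
    _ = exp 1 * ((s : ℝ) / t) ^ s * √s * exp (-s) := by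
        rw [exp_neg, ← exp_one_pow s, div_pow, div_pow]
        ring
    _ ≤ exp 1 * exp (1 + 1 / t) * √(t + 1) * exp (-t) := by gcongr
    _ = exp (2 + 1 / t) * √(t + 1) * exp (-t) := by
        rw [← exp_add]
        ring_nf

lemma exists_factorial_ceil_div_pow_le {t₀ : ℝ} (ht₀ : 0 < t₀) :
    ∃ A : ℝ, 0 < A ∧ ∀ t, t₀ ≤ t →
      (⌈t⌉₊.factorial : ℝ) / t ^ ⌈t⌉₊ ≤ A * √t * exp (-t) := by
  refine ⟨exp (2 + 1 / t₀) * √(1 + 1 / t₀), by positivity, fun t htt₀ => ?_⟩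
  have ht : 0 < t := ht₀.trans_le htt₀
  have hsqrt : √(t + 1) ≤ √(1 + 1 / t₀) * √t := by
    rw [← sqrt_mul (by positivity)]
    gcongr
    calc t + 1 = (1 + 1 / t) * t := by field_simp
      _ ≤ (1 + 1 / t₀) * t := by gcongr
  calc (⌈t⌉₊.factorial : ℝ) / t ^ ⌈t⌉₊ ≤ exp (2 + 1 / t) * √(t + 1) * exp (-t) :=
        factorial_ceil_div_pow_le ht
    _ ≤ exp (2 + 1 / t₀) * (√(1 + 1 / t₀) * √t) * exp (-t) := by gcongr
    _ = exp (2 + 1 / t₀) * √(1 + 1 / t₀) * √t * exp (-t) := by ring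

lemma exists_factorial_rpow_div_pow_le {α x₀ : ℝ} (hα : 0 < α) (hx₀ : 0 < x₀) :
    ∃ C : ℝ, 0 < C ∧ ∀ x, x₀ ≤ x → ∃ s : ℕ, s ≠ 0 ∧
      (s.factorial : ℝ) ^ α / x ^ s ≤ C * √x * exp (-α * x ^ (1 / α)) := by
  obtain ⟨A, hA, hfactorial⟩ := exists_factorial_ceil_div_pow_le (rpow_pos_of_pos hx₀ (1 / α))
  refine ⟨A ^ α, by positivity, fun x hx => ?_⟩
  have hx_pos : 0 < x := hx₀.trans_le hx
  obtain ⟨t, ht⟩ : ∃ t, t = x ^ (1 / α) := ⟨_, rfl⟩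
  have ht_pos : 0 < t := ht ▸ rpow_pos_of_pos hx_pos _
  have htα : t ^ α = x := by
    rw [ht, ← rpow_mul hx_pos.le, one_div_mul_cancel hα.ne', rpow_one]
  have hsqrt : √t ^ α = √x := by
    rw [← htα, sqrt_eq_rpow, sqrt_eq_rpow, ← rpow_mul ht_pos.le, ← rpow_mul ht_pos.le, mul_comm]
  have hmin := hfactorial t (ht ▸ rpow_le_rpow hx₀.le hx (by positivity))
  refine ⟨⌈t⌉₊, (Nat.ceil_pos.mpr ht_pos).ne', ?_⟩
  rw [← ht]
  set s := ⌈t⌉₊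
  calc (s.factorial : ℝ) ^ α / x ^ s = ((s.factorial : ℝ) / t ^ s) ^ α := by
        rw [div_rpow (by positivity) (by positivity), ← htα, rpow_pow_comm ht_pos.le]
    _ ≤ (A * √t * exp (-t)) ^ α := by gcongr
    _ = A ^ α * √x * exp (-α * t) := by
        rw [mul_rpow (by positivity) (by positivity), mul_rpow (by positivity) (by positivity),
          hsqrt, ← exp_mul, neg_mul_comm, mul_comm t]

end Optimization

lemma norm_iteratedDeriv_ofReal_comp {s : ℕ} {f : ℝ → ℝ} {x : ℝ} (hf : ContDiffAt ℝ s f x) :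
    ‖iteratedDeriv s (fun y => (f y : ℂ)) x‖ = |iteratedDeriv s f x| := by
  rw [← norm_iteratedFDeriv_eq_norm_iteratedDeriv, ← Real.norm_eq_abs,
    ← norm_iteratedFDeriv_eq_norm_iteratedDeriv]
  exact Complex.ofRealLI.norm_iteratedFDeriv_comp_left hf le_rfl

theorem fourier_projection_gevrey_decay_general {α η : ℝ} (hα : 0 < α) (hη : 0 < η) :
    ∃ C : ℝ, 0 < C ∧ ∀ (f : ℝ → ℂ) (M : ℝ), Function.Periodic f (2 * π) →
      ContDiff ℝ (⊤ : ℕ∞) f →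
      (∀ s : ℕ, 1 ≤ s → ∀ x : ℝ,
        ‖iteratedDeriv s f x‖ ≤ M * (Nat.factorial s : ℝ) ^ α / η ^ s) →
      ∀ N : ℕ, 1 ≤ N → ∀ x : ℝ,
        ‖SN N f x - f x‖ ≤ C * M * N * exp (-α * (η * N) ^ (1 / α)) := by
  obtain ⟨C, hC, hmin⟩ := exists_factorial_rpow_div_pow_le hα hη
  refine ⟨C * √(2 * η), by positivity, fun f M hper hf hgev N hN x => ?_⟩
  have hM : 0 ≤ M := by
    have h := (norm_nonneg _).trans (hgev 1 le_rfl 0)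
    rw [Nat.factorial_one, Nat.cast_one, one_rpow, mul_one, pow_one] at h
    rwa [le_div_iff₀ hη, zero_mul] at h
  have hηN : η ≤ η * N := le_mul_of_one_le_right hη.le (by exact_mod_cast hN)
  obtain ⟨s, hs, hbound⟩ := hmin (η * N) hηN
  calc ‖SN N f x - f x‖ ≤ √(2 * N) * (M * (s.factorial : ℝ) ^ α / η ^ s) / N ^ s :=
        norm_SN_sub_le hper hs (hf.of_le (by exact_mod_cast le_top))
          (hgev s (Nat.one_le_iff_ne_zero.mpr hs)) (Nat.one_le_iff_ne_zero.mp hN) x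
    _ = √(2 * N) * (M * ((s.factorial : ℝ) ^ α / (η * N) ^ s)) := by
        rw [mul_pow]
        ring
    _ ≤ √(2 * N) * (M * (C * √(η * N) * exp (-α * (η * N) ^ (1 / α)))) := by gcongr
    _ = C * √(2 * η) * M * (√N * √N) * exp (-α * (η * N) ^ (1 / α)) := by
        rw [sqrt_mul zero_le_two, sqrt_mul zero_le_two, sqrt_mul hη.le]
        ring
    _ = C * √(2 * η) * M * N * exp (-α * (η * N) ^ (1 / α)) := by
        rw [mul_self_sqrt N.cast_nonneg]

/-- Fractional-exponential accuracy of the Fourier projection of a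
2π-periodic Gevrey-`α` function:
`|S_N ρ(x) - ρ(x)| ≤ Const · N · e^{-α(ηN)^{1/α}}`. -/
theorem fourier_projection_gevrey_decay
    (α : ℝ) (hα : 1 ≤ α) (ρ : ℝ → ℝ) (η M : ℝ)
    (hper : Function.Periodic ρ (2 * π))
    (hρ : ContDiff ℝ (⊤ : ℕ∞) ρ)
    (hη : 0 < η) (hM : 0 < M)
    (hgev : ∀ s : ℕ, 1 ≤ s → ∀ x : ℝ,
      |iteratedDeriv s ρ x| ≤ M * (Nat.factorial s : ℝ) ^ α / η ^ s) :
    ∃ Const : ℝ, 0 < Const ∧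
      ∀ (N : ℕ), 1 ≤ N → ∀ x : ℝ,
        ‖SN N (fun y => ((ρ y : ℝ) : ℂ)) x - ((ρ x : ℝ) : ℂ)‖ ≤
          Const * N * Real.exp (-α * (η * N) ^ (1 / α)) := by
  obtain ⟨C, hC, hbound⟩ :=
    fourier_projection_gevrey_decay_general (zero_lt_one.trans_le hα) hη
  refine ⟨C * M, mul_pos hC hM, hbound _ M (fun y => congrArg _ (hper y))
    (Complex.ofRealCLM.contDiff.comp hρ) fun s hs x => ?_⟩
  rw [norm_iteratedDeriv_ofReal_comp (hρ.of_le (by exact_mod_cast le_top)).contDiffAt]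
  exact hgev s hs x
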